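/- arXiv:2409.16963 — 2 statements merged into one kernel-verified Lean document; each statement's English description precedes it below -/
import Mathlib

section
/- Let n = 3, s = 1, β(x) = e^{-x}, and p_{ij} = 1/6 for all i ≠ j. Let Y(t) = (y_1(t), y_2(t), y_3(t)) be the solution of the gradient flow of the relative entropy with initial data y_1(0) = 1, y_2(0) = 0, y_3(0) = −1. Then there exists a constant C > 0 such that diam Y(t) ≤ C t^{−1/2} for all t ≥ 1; in particular diam Y(t) → 0 as t → ∞. -/
open Filter Topology

/-- The normalizing constant `Z = Σ_{k ≠ ℓ} β(|y_k - y_ℓ|²)`. -/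
noncomputable def pairZ {E : Type*} [NormedAddCommGroup E] (β : ℝ → ℝ) {n : ℕ}
    (Y : Fin n → E) : ℝ :=
  ∑ k : Fin n, ∑ l : Fin n, if k ≠ l then β (‖Y k - Y l‖ ^ 2) else 0

/-- The low-dimensional similarity `q_{ij}(Y) = β(|y_i - y_j|²) / Z(Y)`. -/
noncomputable def qfun {E : Type*} [NormedAddCommGroup E] (β : ℝ → ℝ) {n : ℕ}
    (Y : Fin n → E) (i j : Fin n) : ℝ :=
  β (‖Y i - Y j‖ ^ 2) / pairZ β Y

/-- The derivative `(log β)'` on `[0, ∞)`. -/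
noncomputable def lbd (β : ℝ → ℝ) : ℝ → ℝ :=
  fun x => derivWithin (fun y => Real.log (β y)) (Set.Ici 0) x

/-- `Y : ℝ → Fin n → E` is a solution of the gradient flow of the relative entropy:
`dy_i/dt = 4 Σ_{j ≠ i} (p_{ij} - q_{ij}(Y)) (y_i - y_j) (log β)'(|y_i - y_j|²)` for `t ≥ 0`. -/
def IsGradFlow {E : Type*} [NormedAddCommGroup E] [NormedSpace ℝ E] (β : ℝ → ℝ) {n : ℕ}
    (p : Fin n → Fin n → ℝ) (Y : ℝ → Fin n → E) : Prop :=
  ∀ i : Fin n, ∀ t ∈ Set.Ici (0 : ℝ),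
    HasDerivWithinAt (fun u => Y u i)
      (∑ j ∈ Finset.univ.filter (· ≠ i),
        (4 * (p i j - qfun β (Y t) i j) * lbd β (‖Y t i - Y t j‖ ^ 2)) • (Y t i - Y t j))
      (Set.Ici 0) t

/-- The diameter of the configuration `Y`, i.e. `max_{i,j} |y_i - y_j|`. -/
noncomputable def diamY {E : Type*} [NormedAddCommGroup E] {n : ℕ} (Y : Fin n → E) : ℝ :=
  Metric.diam (Set.range Y)

/-!
The sum `V` of the squared distances decreases along the flow at the rate
`8 n ∑ (p_{ij} - q_{ij}) |y_i - y_j|²`. As `p` is uniform and `q` decreases with the distance,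
a Chebyshev-type argument bounds this sum from below by a multiple of
`∑ (|y_i - y_j|² - m)²`, where `m = V / (n (n - 1))`. More than `dim E + 1` points cannot be
equidistant unless they coincide, and quantitatively this sum of squares is at least `m²`.
Hence `V' ≤ -c V²`, which integrates to `V(t) ≤ 1 / (c t)`, and `diam Y ≤ √V`.
-/

lemma sum_sum_eq_sum_diag_add_sum_offDiag {ι M : Type*} [Fintype ι] [AddCommMonoid M]
    (f : ι → ι → M) :
    ∑ i, ∑ j, f i j = ∑ i, f i i + ∑ a ∈ Finset.univ.offDiag, f a.1 a.2 := by
  classical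
  rw [← Finset.sum_product', ← Finset.diag_union_offDiag,
    Finset.sum_union (Finset.disjoint_diag_offDiag _), Finset.sum_diag]

lemma sum_offDiag_mul_of_sum_eq_zero {ι R : Type*} [Fintype ι] [CommRing R] {w : ι → R}
    (hw : ∑ i, w i = 0) :
    ∑ a ∈ Finset.univ.offDiag, w a.1 * w a.2 = -∑ i, w i ^ 2 := by
  have h := sum_sum_eq_sum_diag_add_sum_offDiag fun i j => w i * w j
  simp only [← Finset.sum_mul_sum, hw, ← sq, zero_pow two_ne_zero] at h
  exact eq_neg_of_add_eq_zero_right h.symm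

section Chebyshev

lemma exp_neg_mul_sq_sub_le {a b M : ℝ} (ha : a ≤ M) (hb : b ≤ M) :
    Real.exp (-M) * (b - a) ^ 2 ≤ (Real.exp (-a) - Real.exp (-b)) * (b - a) := by
  wlog hab : a ≤ b generalizing a b
  · linear_combination this hb ha (le_of_not_ge hab)
  have hsplit : Real.exp (-a) = Real.exp (-b) * Real.exp (b - a) := by
    rw [← Real.exp_add]; congr 1; ring
  have hslope : Real.exp (-M) * (b - a) ≤ Real.exp (-a) - Real.exp (-b) :=
    calc Real.exp (-M) * (b - a)
        ≤ Real.exp (-b) * (b - a) := by gcongr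
      _ ≤ Real.exp (-b) * (Real.exp (b - a) - 1) := by
          gcongr Real.exp (-b) * ?_
          exact le_sub_iff_add_le.mpr (Real.add_one_le_exp _)
      _ = Real.exp (-a) - Real.exp (-b) := by rw [hsplit]; ring
  calc Real.exp (-M) * (b - a) ^ 2 = Real.exp (-M) * (b - a) * (b - a) := by ring
    _ ≤ (Real.exp (-a) - Real.exp (-b)) * (b - a) := by gcongr

variable {α : Type*} {s : Finset α} {d : α → ℝ} {m M : ℝ}

lemma sum_exp_neg_le_card (hd : ∀ a ∈ s, 0 ≤ d a) :
    ∑ a ∈ s, Real.exp (-d a) ≤ s.card := by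
  simpa using Finset.sum_le_card_nsmul s (fun a => Real.exp (-d a)) 1 fun a ha => by
    simpa using hd a ha

-- Both families of weights have total mass one, so `d a` may be replaced by `d a - m`; since the
-- sum of `d a - m` vanishes, the constant weight `1 / s.card` may then be traded for `exp (-m)`.
lemma sum_inv_card_sub_mul_eq (hs : s.Nonempty) (hm : m = (∑ a ∈ s, d a) / s.card) :
    ∑ a ∈ s, (1 / s.card - Real.exp (-d a) / ∑ b ∈ s, Real.exp (-d b)) * d a =
      (∑ a ∈ s, (Real.exp (-m) - Real.exp (-d a)) * (d a - m)) / ∑ b ∈ s, Real.exp (-d b) := by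
  have hcard : (s.card : ℝ) ≠ 0 := by exact_mod_cast hs.card_ne_zero
  have hZ : ∑ b ∈ s, Real.exp (-d b) ≠ 0 :=
    (Finset.sum_pos (fun b _ => Real.exp_pos (-d b)) hs).ne'
  have hd : ∑ a ∈ s, d a = s.card * m := by rw [hm]; field_simp
  simp only [sub_mul, mul_sub, Finset.sum_sub_distrib, div_mul_eq_mul_div, ← Finset.sum_div,
    ← Finset.mul_sum, ← Finset.sum_mul, Finset.sum_const, nsmul_eq_mul, hd]
  field_simp
  ring

lemma exp_neg_div_card_mul_sum_sq_sub_le (hs : s.Nonempty) (hd : ∀ a ∈ s, 0 ≤ d a)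
    (hdM : ∀ a ∈ s, d a ≤ M) (hm : m = (∑ a ∈ s, d a) / s.card) :
    Real.exp (-M) / s.card * ∑ a ∈ s, (d a - m) ^ 2 ≤
      ∑ a ∈ s, (1 / s.card - Real.exp (-d a) / ∑ b ∈ s, Real.exp (-d b)) * d a := by
  have hmM : m ≤ M := by
    rw [hm, ← Finset.expect_eq_sum_div_card]
    exact Finset.expect_le hs hdM
  have hZ : 0 < ∑ b ∈ s, Real.exp (-d b) := Finset.sum_pos (fun b _ => Real.exp_pos (-d b)) hs
  rw [sum_inv_card_sub_mul_eq hs hm]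
  calc Real.exp (-M) / s.card * ∑ a ∈ s, (d a - m) ^ 2
      = (∑ a ∈ s, Real.exp (-M) * (d a - m) ^ 2) / s.card := by
        rw [← Finset.mul_sum, div_mul_eq_mul_div]
    _ ≤ (∑ a ∈ s, Real.exp (-M) * (d a - m) ^ 2) / ∑ b ∈ s, Real.exp (-d b) := by
        exact div_le_div_of_nonneg_left (by positivity) hZ (sum_exp_neg_le_card hd)
    _ ≤ _ := by
        gcongr ?_ / _
        exact Finset.sum_le_sum fun a ha => exp_neg_mul_sq_sub_le hmM (hdM a ha)

end Chebyshev

section AffineDependence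

variable {k V ι : Type*} [AddCommGroup V] {Y : ι → V}

lemma sum_sum_smul_sub_eq_zero [Fintype ι] [Ring k] [Module k V] {w : ι → ι → k}
    (hw : ∀ i j, w i j = w j i) :
    ∑ i, ∑ j, w i j • (Y i - Y j) = 0 := by
  simp only [smul_sub, Finset.sum_sub_distrib]
  rw [sub_eq_zero, Finset.sum_comm]
  simp only [hw]

lemma exists_weights_of_not_affineIndependent [Fintype ι] [Module ℝ V]
    (hY : ¬AffineIndependent ℝ Y) :
    ∃ w : ι → ℝ, ∑ i, w i = 0 ∧ ∑ i, w i • Y i = 0 ∧ 0 < ∑ i, w i ^ 2 := by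
  simp only [affineIndependent_iff_of_fintype, not_forall] at hY
  obtain ⟨w, hw, hwY, k, hk⟩ := hY
  rw [Finset.univ.weightedVSub_eq_linear_combination hw] at hwY
  exact ⟨w, hw, hwY,
    Finset.sum_pos' (fun i _ => sq_nonneg _) ⟨k, Finset.mem_univ k, by positivity⟩⟩

lemma nontrivial_of_not_affineIndependent [Ring k] [Module k V]
    (hY : ¬AffineIndependent k Y) : Nontrivial ι := by
  by_contra hι
  have := not_nontrivial_iff_subsingleton.mp hι
  exact hY (affineIndependent_of_subsingleton k Y)

lemma not_affineIndependent_of_finrank_add_one_lt_card [Fintype ι] [DivisionRing k] [Module k V]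
    [FiniteDimensional k V] (h : Module.finrank k V + 1 < Fintype.card ι) :
    ¬AffineIndependent k Y := fun hY => by
  have := hY.card_le_finrank_succ
  have := (vectorSpan k (Set.range Y)).finrank_le
  omega

end AffineDependence

section SquaredDistances

variable {E ι : Type*} [NormedAddCommGroup E] [Fintype ι]

/-- The sum of the squared distances over all ordered pairs of points of a configuration, which
serves as Lyapunov function of the flow. -/
noncomputable def sumSqDist (Y : ι → E) : ℝ :=
  ∑ i, ∑ j, ‖Y i - Y j‖ ^ 2

lemma sumSqDist_eq_sum_offDiag (Y : ι → E) :
    sumSqDist Y = ∑ a ∈ Finset.univ.offDiag, ‖Y a.1 - Y a.2‖ ^ 2 := by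
  simp [sumSqDist, sum_sum_eq_sum_diag_add_sum_offDiag]

lemma sq_norm_sub_le_sumSqDist (Y : ι → E) (i j : ι) : ‖Y i - Y j‖ ^ 2 ≤ sumSqDist Y :=
  calc ‖Y i - Y j‖ ^ 2 ≤ ∑ l, ‖Y i - Y l‖ ^ 2 :=
        Finset.single_le_sum (f := fun l => ‖Y i - Y l‖ ^ 2) (fun _ _ => by positivity)
          (Finset.mem_univ j)
    _ ≤ sumSqDist Y :=
        Finset.single_le_sum (f := fun k => ∑ l, ‖Y k - Y l‖ ^ 2) (fun _ _ => by positivity)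
          (Finset.mem_univ i)

lemma diamY_le_sqrt_sumSqDist {n : ℕ} (Y : Fin n → E) : diamY Y ≤ √(sumSqDist Y) := by
  refine Metric.diam_le_of_forall_dist_le (Real.sqrt_nonneg _) ?_
  rintro _ ⟨i, rfl⟩ _ ⟨j, rfl⟩
  rw [dist_eq_norm]
  exact Real.le_sqrt_of_sq_le (sq_norm_sub_le_sumSqDist Y i j)

variable [InnerProductSpace ℝ E] {Y : ι → E}

lemma sum_offDiag_mul_sq_norm_sub_eq_zero {w : ι → ℝ} (hw : ∑ i, w i = 0)
    (hwY : ∑ i, w i • Y i = 0) :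
    ∑ a ∈ Finset.univ.offDiag, w a.1 * w a.2 * ‖Y a.1 - Y a.2‖ ^ 2 = 0 := by
  have h := inner_sum_smul_sum_smul_of_sum_eq_zero Y hw Y hw
  rw [hwY, inner_zero_left, sum_sum_eq_sum_diag_add_sum_offDiag, eq_comm] at h
  simpa [← sq] using h

-- An affine relation `∑ w i • Y i = 0` with `∑ w i = 0` gives
-- `m * ∑ w i ^ 2 = ∑ w i * w j * (‖Y i - Y j‖ ^ 2 - m)` over `i ≠ j`; conclude by Cauchy-Schwarz.
lemma sq_le_sum_sq_sub_of_not_affineIndependent (hY : ¬AffineIndependent ℝ Y) (m : ℝ) :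
    m ^ 2 ≤ ∑ a ∈ Finset.univ.offDiag, (‖Y a.1 - Y a.2‖ ^ 2 - m) ^ 2 := by
  obtain ⟨w, hw, hwY, hpos⟩ := exists_weights_of_not_affineIndependent hY
  have hm : m * ∑ i, w i ^ 2 =
      ∑ a ∈ Finset.univ.offDiag, w a.1 * w a.2 * (‖Y a.1 - Y a.2‖ ^ 2 - m) := by
    simp only [mul_sub, Finset.sum_sub_distrib, ← Finset.sum_mul,
      sum_offDiag_mul_sq_norm_sub_eq_zero hw hwY, sum_offDiag_mul_of_sum_eq_zero hw]
    ring
  have hweights : ∑ a ∈ Finset.univ.offDiag, (w a.1 * w a.2) ^ 2 ≤ (∑ i, w i ^ 2) ^ 2 := by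
    rw [sq (∑ i, w i ^ 2), Finset.sum_mul_sum, sum_sum_eq_sum_diag_add_sum_offDiag]
    simp only [mul_pow]
    exact le_add_of_nonneg_left (Finset.sum_nonneg fun i _ => by positivity)
  have hcauchy : m ^ 2 * (∑ i, w i ^ 2) ^ 2 ≤
      (∑ a ∈ Finset.univ.offDiag, (‖Y a.1 - Y a.2‖ ^ 2 - m) ^ 2) * (∑ i, w i ^ 2) ^ 2 := by
    rw [← mul_pow, hm, mul_comm (∑ a ∈ _, _)]
    exact (Finset.sum_mul_sq_le_sq_mul_sq _ _ _).trans (by gcongr)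
  exact le_of_mul_le_mul_right hcauchy (by positivity)

variable {w : ι → ι → ℝ}

lemma two_mul_sum_inner_sum_smul_sub (hw : ∀ i j, w i j = w j i) :
    2 * ∑ i, inner ℝ (Y i) (∑ j, w i j • (Y i - Y j)) = ∑ i, ∑ j, w i j * ‖Y i - Y j‖ ^ 2 := by
  have hexpand : ∑ i, inner ℝ (Y i) (∑ j, w i j • (Y i - Y j)) =
      ∑ i, ∑ j, w i j * inner ℝ (Y i) (Y i - Y j) := by
    simp only [inner_sum, real_inner_smul_right]
  have hswap : ∑ i, ∑ j, w i j * inner ℝ (Y i) (Y i - Y j) =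
      ∑ i, ∑ j, w i j * inner ℝ (-Y j) (Y i - Y j) := by
    rw [Finset.sum_comm]
    refine Finset.sum_congr rfl fun i _ => Finset.sum_congr rfl fun j _ => ?_
    rw [hw, inner_neg_left, ← inner_neg_right, neg_sub]
  rw [hexpand, two_mul]
  nth_rw 2 [hswap]
  simp only [← Finset.sum_add_distrib, ← mul_add, ← inner_add_left, ← sub_eq_add_neg,
    real_inner_self_eq_norm_sq]

lemma sum_sum_inner_sub_sub {g : ι → E} (hg : ∑ i, g i = 0) :
    ∑ i, ∑ j, inner ℝ (Y i - Y j) (g i - g j) = 2 * Fintype.card ι * ∑ i, inner ℝ (Y i) (g i) := by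
  simp only [inner_sub_left, inner_sub_right, Finset.sum_sub_distrib, ← inner_sum, ← sum_inner, hg,
    inner_zero_right, Finset.sum_const, Finset.card_univ, ← Nat.cast_smul_eq_nsmul ℝ,
    real_inner_smul_right, smul_eq_mul, ← Finset.mul_sum]
  ring

lemma hasDerivWithinAt_sumSqDist_of_symm (hw : ∀ i j, w i j = w j i) {Y : ℝ → ι → E} {s : Set ℝ}
    {t : ℝ} (hY : ∀ i, HasDerivWithinAt (fun u => Y u i) (∑ j, w i j • (Y t i - Y t j)) s t) :
    HasDerivWithinAt (fun u => sumSqDist (Y u))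
      (2 * Fintype.card ι * ∑ i, ∑ j, w i j * ‖Y t i - Y t j‖ ^ 2) s t := by
  have hderiv : HasDerivWithinAt (fun u => sumSqDist (Y u)) (∑ i, ∑ j, 2 * inner ℝ (Y t i - Y t j)
      (∑ k, w i k • (Y t i - Y t k) - ∑ k, w j k • (Y t j - Y t k))) s t :=
    .fun_sum fun i _ => .fun_sum fun j _ => ((hY i).sub (hY j)).norm_sq
  refine hderiv.congr_deriv ?_
  simp only [← Finset.mul_sum]
  rw [sum_sum_inner_sub_sub (sum_sum_smul_sub_eq_zero hw), ← two_mul_sum_inner_sum_smul_sub hw]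
  ring

end SquaredDistances

lemma antitoneOn_Ici_of_hasDerivWithinAt_nonpos {f f' : ℝ → ℝ} {a : ℝ}
    (hf : ∀ u ∈ Set.Ici a, HasDerivWithinAt f (f' u) (Set.Ici a) u)
    (hf' : ∀ u ∈ Set.Ici a, f' u ≤ 0) : AntitoneOn f (Set.Ici a) :=
  antitoneOn_of_hasDerivWithinAt_nonpos (convex_Ici a)
    (fun u hu => (hf u hu).continuousWithinAt)
    (fun u hu => (hf u (interior_subset hu)).mono interior_subset)
    fun u hu => hf' u (interior_subset hu)

lemma le_inv_of_deriv_le_neg_mul_sq {f f' : ℝ → ℝ} {c t : ℝ} (hc : 0 < c)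
    (hf : ∀ u ∈ Set.Ici 0, HasDerivWithinAt f (f' u) (Set.Ici 0) u)
    (hf' : ∀ u ∈ Set.Ici 0, f' u ≤ -(c * f u ^ 2)) (ht : 0 < t) : f t ≤ (c * t)⁻¹ := by
  rcases le_or_gt (f t) 0 with hft | hft
  · exact hft.trans (by positivity)
  have hanti : AntitoneOn f (Set.Ici 0) :=
    antitoneOn_Ici_of_hasDerivWithinAt_nonpos hf fun u hu =>
      (hf' u hu).trans (neg_nonpos.mpr (by positivity))
  have hpos : ∀ u ∈ Set.Icc 0 t, 0 < f u := fun u hu =>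
    hft.trans_le (hanti (Set.mem_Ici.mpr hu.1) (Set.mem_Ici.mpr ht.le) hu.2)
  have hderiv : ∀ u ∈ Set.Icc 0 t,
      HasDerivWithinAt (fun u => (f u)⁻¹ - c * u) (-f' u / f u ^ 2 - c) (Set.Icc 0 t) u :=
    fun u hu => (((hf u hu.1).mono Set.Icc_subset_Ici_self).fun_inv (hpos u hu).ne').sub
      (by simpa using (hasDerivWithinAt_id u _).const_mul c)
  have hmono : MonotoneOn (fun u => (f u)⁻¹ - c * u) (Set.Icc 0 t) := by
    refine monotoneOn_of_hasDerivWithinAt_nonneg (convex_Icc 0 t)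
      (fun u hu => (hderiv u hu).continuousWithinAt)
      (fun u hu => (hderiv u (interior_subset hu)).mono interior_subset) fun u hu => ?_
    have hu := interior_subset hu
    rw [sub_nonneg, le_div_iff₀ (pow_pos (hpos u hu) 2)]
    exact le_neg_of_le_neg (hf' u hu.1)
  have hinv : c * t ≤ (f t)⁻¹ := by
    have h := hmono (Set.left_mem_Icc.mpr ht.le) (Set.right_mem_Icc.mpr ht.le) ht.le
    have h0 := inv_pos.mpr (hpos 0 (Set.left_mem_Icc.mpr ht.le))
    simp only [mul_zero, sub_zero] at h
    linarith
  exact (le_inv_comm₀ (by positivity) hft).mp hinv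

section GradFlow

lemma lbd_exp_neg {x : ℝ} (hx : 0 ≤ x) : lbd (fun x => Real.exp (-x)) x = -1 := by
  simp only [lbd, Real.log_exp]
  exact (hasDerivAt_neg x).hasDerivWithinAt.derivWithin (uniqueDiffOn_Ici 0 x hx)

variable {E : Type*} [NormedAddCommGroup E] {n : ℕ}

lemma pairZ_eq_sum_offDiag (β : ℝ → ℝ) (Y : Fin n → E) :
    pairZ β Y = ∑ a ∈ Finset.univ.offDiag, β (‖Y a.1 - Y a.2‖ ^ 2) := by
  rw [pairZ, sum_sum_eq_sum_diag_add_sum_offDiag]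
  simp only [ne_eq, not_true_eq_false, if_false, Finset.sum_const_zero, zero_add]
  exact Finset.sum_congr rfl fun a ha => if_pos (Finset.mem_offDiag.mp ha).2.2

lemma qfun_comm (β : ℝ → ℝ) (Y : Fin n → E) (i j : Fin n) : qfun β Y i j = qfun β Y j i := by
  rw [qfun, qfun, norm_sub_rev]

/-- The rate at which `sumSqDist` decreases along the gradient flow for `β(x) = e^{-x}`. -/
noncomputable def dissipation (p : Fin n → Fin n → ℝ) (Y : Fin n → E) : ℝ :=
  8 * n * ∑ a ∈ Finset.univ.offDiag,
    (p a.1 a.2 - qfun (fun x => Real.exp (-x)) Y a.1 a.2) * ‖Y a.1 - Y a.2‖ ^ 2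

variable [InnerProductSpace ℝ E] {p : Fin n → Fin n → ℝ}

lemma IsGradFlow.hasDerivWithinAt_sumSqDist {Y : ℝ → Fin n → E}
    (hflow : IsGradFlow (fun x => Real.exp (-x)) p Y) (hp : ∀ i j, p i j = p j i) {t : ℝ}
    (ht : t ∈ Set.Ici 0) :
    HasDerivWithinAt (fun u => sumSqDist (Y u)) (-dissipation p (Y t)) (Set.Ici 0) t := by
  set q := qfun (fun x => Real.exp (-x)) (Y t) with hq
  have hY : ∀ i, HasDerivWithinAt (fun u => Y u i)
      (∑ j, (-4 * (p i j - q i j)) • (Y t i - Y t j)) (Set.Ici 0) t := by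
    refine fun i => (hflow i t ht).congr_deriv ?_
    rw [Finset.sum_filter]
    refine Finset.sum_congr rfl fun j _ => ?_
    rcases eq_or_ne j i with rfl | hji
    · simp
    · rw [if_pos hji, lbd_exp_neg (sq_nonneg _), ← hq]
      congr 1
      ring
  refine (hasDerivWithinAt_sumSqDist_of_symm (fun i j => ?_) hY).congr_deriv ?_
  · rw [hp, hq, qfun_comm]
  · rw [sum_sum_eq_sum_diag_add_sum_offDiag, Fintype.card_fin]
    simp only [sub_self, norm_zero, ne_eq, OfNat.ofNat_ne_zero, not_false_eq_true, zero_pow,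
      mul_zero, Finset.sum_const_zero, zero_add, mul_assoc, ← Finset.mul_sum, dissipation, ← hq]
    ring

lemma card_offDiag_univ_fin :
    ((Finset.univ : Finset (Fin n)).offDiag.card : ℝ) = n * (n - 1) := by
  rw [Finset.offDiag_card, Finset.card_fin, Nat.cast_sub (Nat.le_mul_self n), Nat.cast_mul]
  ring

lemma mul_sq_sumSqDist_le_dissipation (hp : ∀ i j, i ≠ j → p i j = 1 / (n * (n - 1)))
    {Y : Fin n → E} (hY : ¬AffineIndependent ℝ Y) {M : ℝ} (hM : sumSqDist Y ≤ M) :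
    8 * n * Real.exp (-M) / (n * (n - 1)) ^ 3 * sumSqDist Y ^ 2 ≤ dissipation p Y := by
  have hne : (Finset.univ : Finset (Fin n)).offDiag.Nonempty := by
    have := nontrivial_of_not_affineIndependent hY
    obtain ⟨i, j, hij⟩ := exists_pair_ne (Fin n)
    exact ⟨(i, j), by simpa using hij⟩
  have hpq : dissipation p Y = 8 * n * ∑ a ∈ Finset.univ.offDiag,
      (1 / (Finset.univ.offDiag : Finset (Fin n × Fin n)).card -
        Real.exp (-‖Y a.1 - Y a.2‖ ^ 2) /
          ∑ b ∈ Finset.univ.offDiag, Real.exp (-‖Y b.1 - Y b.2‖ ^ 2)) * ‖Y a.1 - Y a.2‖ ^ 2 := by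
    rw [dissipation]
    congr 1
    refine Finset.sum_congr rfl fun a ha => ?_
    rw [hp _ _ (Finset.mem_offDiag.mp ha).2.2, card_offDiag_univ_fin, qfun, pairZ_eq_sum_offDiag]
  rw [hpq, ← card_offDiag_univ_fin]
  set s : Finset (Fin n × Fin n) := Finset.univ.offDiag
  calc 8 * n * Real.exp (-M) / (s.card : ℝ) ^ 3 * sumSqDist Y ^ 2
      = 8 * n * (Real.exp (-M) / s.card * (sumSqDist Y / s.card) ^ 2) := by ring
    _ ≤ 8 * n * (Real.exp (-M) / s.card *
          ∑ a ∈ s, (‖Y a.1 - Y a.2‖ ^ 2 - sumSqDist Y / s.card) ^ 2) := by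
        gcongr; exact sq_le_sum_sq_sub_of_not_affineIndependent hY _
    _ ≤ _ := by
        gcongr
        exact exp_neg_div_card_mul_sum_sq_sub_le hne (fun a _ => sq_nonneg _)
          (fun a _ => (sq_norm_sub_le_sumSqDist Y a.1 a.2).trans hM)
          (by rw [sumSqDist_eq_sum_offDiag])

variable {Y : ℝ → Fin n → E}

lemma IsGradFlow.exists_sumSqDist_le_inv (hflow : IsGradFlow (fun x => Real.exp (-x)) p Y)
    (hp : ∀ i j, i ≠ j → p i j = 1 / (n * (n - 1)))
    (hY : ∀ t ∈ Set.Ici 0, ¬AffineIndependent ℝ (Y t)) :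
    ∃ c > 0, ∀ t > 0, sumSqDist (Y t) ≤ (c * t)⁻¹ := by
  have hn : (1 : ℝ) < n := by
    exact_mod_cast Fin.nontrivial_iff_two_le.mp
      (nontrivial_of_not_affineIndependent (hY 0 Set.self_mem_Ici))
  have hN : (0 : ℝ) < n * (n - 1) := mul_pos (by linarith) (by linarith)
  have hsymm : ∀ i j, p i j = p j i := fun i j => by
    rcases eq_or_ne i j with rfl | hij
    · rfl
    · rw [hp i j hij, hp j i hij.symm]
  have hanti : AntitoneOn (fun t => sumSqDist (Y t)) (Set.Ici 0) :=
    antitoneOn_Ici_of_hasDerivWithinAt_nonpos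
      (fun t ht => hflow.hasDerivWithinAt_sumSqDist hsymm ht) fun t ht => neg_nonpos.mpr <|
        (by positivity : (0 : ℝ) ≤ _).trans (mul_sq_sumSqDist_le_dissipation hp (hY t ht) le_rfl)
  have hc : 0 < 8 * n * Real.exp (-sumSqDist (Y 0)) / (n * (n - 1)) ^ 3 :=
    div_pos (by positivity) (pow_pos hN 3)
  refine ⟨_, hc, fun t ht => le_inv_of_deriv_le_neg_mul_sq hc
    (fun u hu => hflow.hasDerivWithinAt_sumSqDist hsymm hu) (fun u hu => neg_le_neg ?_) ht⟩
  exact mul_sq_sumSqDist_le_dissipation hp (hY u hu) (hanti Set.self_mem_Ici hu hu)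

end GradFlow

lemma sqrt_inv_mul_eq_mul_rpow {c t : ℝ} (hc : 0 ≤ c) (ht : 0 ≤ t) :
    √((c * t)⁻¹) = √c⁻¹ * t ^ (-(1 : ℝ) / 2) := by
  rw [mul_inv, Real.sqrt_mul (inv_nonneg.mpr hc), Real.sqrt_inv t, Real.sqrt_eq_rpow t, neg_div,
    Real.rpow_neg ht]

lemma tendsto_zero_of_le_mul_rpow {f : ℝ → ℝ} {C r : ℝ} (hr : r < 0) (hf₀ : ∀ t, 0 ≤ f t)
    (hf : ∀ t, 1 ≤ t → f t ≤ C * t ^ r) : Tendsto f atTop (𝓝 0) := by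
  refine squeeze_zero' (.of_forall hf₀) ((eventually_ge_atTop 1).mono hf) ?_
  simpa using (tendsto_rpow_neg_atTop (neg_pos.mpr hr)).const_mul C

theorem collapse_example_sne_general {E : Type*} [NormedAddCommGroup E] [InnerProductSpace ℝ E]
    [FiniteDimensional ℝ E] {n : ℕ} (hn : Module.finrank ℝ E + 1 < n)
    {p : Fin n → Fin n → ℝ} (hp : ∀ i j, i ≠ j → p i j = 1 / (n * (n - 1)))
    {Y : ℝ → Fin n → E} (hflow : IsGradFlow (fun x => Real.exp (-x)) p Y) :
    (∃ C : ℝ, 0 < C ∧ ∀ t : ℝ, 1 ≤ t → diamY (Y t) ≤ C * t ^ (-(1 : ℝ) / 2)) ∧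
      Tendsto (fun t => diamY (Y t)) atTop (𝓝 0) := by
  obtain ⟨c, hc, hV⟩ := hflow.exists_sumSqDist_le_inv hp fun t _ =>
    not_affineIndependent_of_finrank_add_one_lt_card (by rwa [Fintype.card_fin])
  have hdiam : ∀ t : ℝ, 1 ≤ t → diamY (Y t) ≤ √c⁻¹ * t ^ (-(1 : ℝ) / 2) := fun t ht =>
    calc diamY (Y t) ≤ √(sumSqDist (Y t)) := diamY_le_sqrt_sumSqDist (Y t)
      _ ≤ √((c * t)⁻¹) := Real.sqrt_le_sqrt (hV t (by linarith))
      _ = √c⁻¹ * t ^ (-(1 : ℝ) / 2) := sqrt_inv_mul_eq_mul_rpow hc.le (by linarith)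
  exact ⟨⟨√c⁻¹, by positivity, hdiam⟩,
    tendsto_zero_of_le_mul_rpow (by norm_num) (fun _ => Metric.diam_nonneg) hdiam⟩

/-- **Example 4.1 (SNE case).** For `n = 3` points in `ℝ`, `β(x) = e^{-x}`, uniform
probabilities `p_{ij} = 1/6`, and initial data `(1, 0, -1)`, the solution of the gradient
flow satisfies `diam Y(t) ≤ C t^{-1/2}` for `t ≥ 1`; in particular `diam Y(t) → 0`. -/
theorem collapse_example_sne
    (β : ℝ → ℝ) (hβ : β = fun x => Real.exp (-x))
    (p : Fin 3 → Fin 3 → ℝ) (hp : ∀ i j, i ≠ j → p i j = 1 / 6)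
    (Y : ℝ → Fin 3 → ℝ)
    (hflow : IsGradFlow β p Y)
    (hY0 : Y 0 = ![1, 0, -1]) :
    (∃ C : ℝ, 0 < C ∧ ∀ t : ℝ, 1 ≤ t → diamY (Y t) ≤ C * t ^ (-(1 : ℝ) / 2)) ∧
      Tendsto (fun t => diamY (Y t)) atTop (𝓝 0) := by
  subst hβ
  exact collapse_example_sne_general (by simp) (fun i j hij => by rw [hp i j hij]; norm_num) hflow
end

section
/- Let n = 4, s = 2, β(x) = (1+x)^{-1}, and fix a ∈ (1/10, 1/8). Define p_{12} = p_{23} = p_{34} = p_{14} = a and p_{13} = p_{24} = (1 − 8a)/4 (extended symmetrically, p_{ij} = p_{ji}). Let X_0 > 0 and let Y(t) be the solution of the gradient flow of the relative entropy with initial data y_1(0) = (X_0, 0), y_2(0) = (0, X_0), y_3(0) = (−X_0, 0), y_4(0) = (0, −X_0). Then there exists a constant c > 0 such that diam Y(t) ≥ c t^{1/4} for all t ≥ 0. -/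
open Filter Topology

/-!
The flow commutes with linear isometries of the ambient space and with permutations of the points
that preserve the weights. By uniqueness of solutions, a configuration that starts as a centred
square stays one: it remains invariant under a cyclic shift of the points followed by a quarter
turn, and under a shift by two followed by `-1`. The flow thus reduces to a scalar equation for
`u = ‖y₁‖²`, namely `u' = 2 r(u) u`, where the rate `r(u)` is positive because the side similarity
`(1 + 4u) / (12 + 40u)` never exceeds `1/10 < a`. For large `u` the rate is of order `u⁻²`, so
`(u²)' = 4 r(u) u²` is bounded below by a positive constant; hence `‖y₁‖⁴ = u²` grows at least
linearly.
-/

lemma add_mul_le_of_le_hasDerivWithinAt {f f' : ℝ → ℝ} {a κ : ℝ}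
    (hf : ∀ t ∈ Set.Ici a, HasDerivWithinAt f (f' t) (Set.Ici a) t)
    (hκ : ∀ t ∈ Set.Ici a, κ ≤ f' t) {t : ℝ} (ht : t ∈ Set.Ici a) :
    f a + κ * (t - a) ≤ f t := by
  have hderiv : ∀ s ∈ interior (Set.Ici a), HasDerivAt f (f' s) s := fun s hs =>
    (hf s (interior_subset hs)).hasDerivAt (mem_interior_iff_mem_nhds.1 hs)
  have hgrowth := (convex_Ici a).mul_sub_le_image_sub_of_le_deriv
    (fun s hs => (hf s hs).continuousWithinAt)
    (fun s hs => (hderiv s hs).differentiableAt.differentiableWithinAt)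
    (fun s hs => (hκ s (interior_subset hs)).trans_eq (hderiv s hs).deriv.symm)
    a Set.self_mem_Ici t ht ht
  linarith

lemma eqOn_Ici_of_locallyLipschitz {F : Type*} [NormedAddCommGroup F] [NormedSpace ℝ F]
    {v : F → F} (hv : LocallyLipschitz v) {f g : ℝ → F} {a : ℝ}
    (hf : ∀ t ∈ Set.Ici a, HasDerivWithinAt f (v (f t)) (Set.Ici a) t)
    (hg : ∀ t ∈ Set.Ici a, HasDerivWithinAt g (v (g t)) (Set.Ici a) t)
    (ha : f a = g a) : Set.EqOn f g (Set.Ici a) := by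
  intro t ht
  have hfc : ContinuousOn f (Set.Icc a t) := fun s hs =>
    (hf s hs.1).continuousWithinAt.mono Set.Icc_subset_Ici_self
  have hgc : ContinuousOn g (Set.Icc a t) := fun s hs =>
    (hg s hs.1).continuousWithinAt.mono Set.Icc_subset_Ici_self
  have hcompact : IsCompact (f '' Set.Icc a t ∪ g '' Set.Icc a t) :=
    (isCompact_Icc.image_of_continuousOn hfc).union (isCompact_Icc.image_of_continuousOn hgc)
  obtain ⟨K, hK⟩ := hv.locallyLipschitzOn.exists_lipschitzOnWith_of_compact hcompact
  exact ODE_solution_unique_of_mem_Icc_right (v := fun _ => v) (fun _ _ => hK)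
    hfc (fun s hs => (hf s hs.1).mono (Set.Ici_subset_Ici.2 hs.1))
    (fun s hs => Or.inl (Set.mem_image_of_mem f (Set.Ico_subset_Icc_self hs)))
    hgc (fun s hs => (hg s hs.1).mono (Set.Ici_subset_Ici.2 hs.1))
    (fun s hs => Or.inr (Set.mem_image_of_mem g (Set.Ico_subset_Icc_self hs)))
    ha (Set.right_mem_Icc.2 ht)

section GradientField

variable {E : Type*} [NormedAddCommGroup E] {β : ℝ → ℝ} {n : ℕ}

lemma dist_le_diamY (Y : Fin n → E) (i j : Fin n) : dist (Y i) (Y j) ≤ diamY Y :=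
  Metric.dist_le_diam_of_mem (Set.finite_range Y).isBounded (Set.mem_range_self i)
    (Set.mem_range_self j)

lemma pairZ_pos (hpos : ∀ x ∈ Set.Ici (0 : ℝ), 0 < β x) {i j : Fin n} (hij : i ≠ j)
    (Y : Fin n → E) : 0 < pairZ β Y := by
  have hβ : ∀ k l, 0 < β (‖Y k - Y l‖ ^ 2) := fun k l =>
    hpos _ (Set.mem_Ici.2 (sq_nonneg _))
  have hnonneg : ∀ k l, 0 ≤ if k ≠ l then β (‖Y k - Y l‖ ^ 2) else 0 := fun k l => by
    split_ifs
    exacts [(hβ k l).le, le_rfl]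
  refine Finset.sum_pos' (fun k _ => Finset.sum_nonneg fun l _ => hnonneg k l)
    ⟨i, Finset.mem_univ i, Finset.sum_pos' (fun l _ => hnonneg i l) ⟨j, Finset.mem_univ j, ?_⟩⟩
  rw [if_pos hij]
  exact hβ i j

/-- The vector field on configurations whose integral curves are the gradient flows of the
relative entropy, i.e. the right-hand side in `IsGradFlow`. -/
noncomputable def gradField [NormedSpace ℝ E] (β : ℝ → ℝ) (p : Fin n → Fin n → ℝ)
    (Y : Fin n → E) : Fin n → E :=
  fun i => ∑ j ∈ Finset.univ.filter (· ≠ i),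
    (4 * (p i j - qfun β Y i j) * lbd β (‖Y i - Y j‖ ^ 2)) • (Y i - Y j)

lemma isGradFlow_iff_hasDerivWithinAt [NormedSpace ℝ E] {p : Fin n → Fin n → ℝ}
    {Y : ℝ → Fin n → E} :
    IsGradFlow β p Y ↔
      ∀ t ∈ Set.Ici (0 : ℝ), HasDerivWithinAt Y (gradField β p (Y t)) (Set.Ici 0) t := by
  simp only [hasDerivWithinAt_pi]
  exact ⟨fun h t ht i => h i t ht, fun h i t ht => h t ht i⟩

section Regularity

variable [InnerProductSpace ℝ E]

lemma contDiffOn_lbd (hβ : ContDiffOn ℝ 2 β (Set.Ici 0))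
    (hpos : ∀ x ∈ Set.Ici (0 : ℝ), 0 < β x) : ContDiffOn ℝ 1 (lbd β) (Set.Ici 0) :=
  (hβ.log fun x hx => (hpos x hx).ne').derivWithin (uniqueDiffOn_Ici 0) (by norm_num)

lemma contDiff_comp_norm_sub_sq {f : ℝ → ℝ} {m : WithTop ℕ∞} (hf : ContDiffOn ℝ m f (Set.Ici 0))
    (i j : Fin n) : ContDiff ℝ m fun Y : Fin n → E => f (‖Y i - Y j‖ ^ 2) :=
  contDiffOn_univ.1 <| hf.comp
    (((contDiff_apply ℝ E i).sub (contDiff_apply ℝ E j)).norm_sq ℝ).contDiffOn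
    fun _ _ => Set.mem_Ici.2 (sq_nonneg _)

lemma contDiff_gradField (hβ : ContDiffOn ℝ 2 β (Set.Ici 0))
    (hpos : ∀ x ∈ Set.Ici (0 : ℝ), 0 < β x) (p : Fin n → Fin n → ℝ) :
    ContDiff ℝ 1 (gradField β p : (Fin n → E) → Fin n → E) := by
  have hβ₁ : ContDiffOn ℝ 1 β (Set.Ici 0) := hβ.of_le (by norm_num)
  have hZ : ContDiff ℝ 1 fun Y : Fin n → E => pairZ β Y :=
    ContDiff.sum fun k _ => ContDiff.sum fun l _ => by
      split_ifs
      exacts [contDiff_comp_norm_sub_sq hβ₁ k l, contDiff_const]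
  refine contDiff_pi.2 fun i => ContDiff.sum fun j hj => ?_
  have hq : ContDiff ℝ 1 fun Y : Fin n → E => qfun β Y i j :=
    (contDiff_comp_norm_sub_sq hβ₁ i j).div hZ fun Y =>
      (pairZ_pos hpos (Finset.mem_filter.1 hj).2 Y).ne'
  exact ((contDiff_const.mul (contDiff_const.sub hq)).mul
    (contDiff_comp_norm_sub_sq (contDiffOn_lbd hβ hpos) i j)).smul
    ((contDiff_apply ℝ E i).sub (contDiff_apply ℝ E j))

lemma IsGradFlow.eqOn_Ici (hβ : ContDiffOn ℝ 2 β (Set.Ici 0))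
    (hpos : ∀ x ∈ Set.Ici (0 : ℝ), 0 < β x) {p : Fin n → Fin n → ℝ} {Y W : ℝ → Fin n → E}
    (hY : IsGradFlow β p Y) (hW : IsGradFlow β p W) (h0 : Y 0 = W 0) :
    Set.EqOn Y W (Set.Ici 0) :=
  eqOn_Ici_of_locallyLipschitz (contDiff_gradField hβ hpos p).locallyLipschitz
    (isGradFlow_iff_hasDerivWithinAt.1 hY) (isGradFlow_iff_hasDerivWithinAt.1 hW) h0

end Regularity

section Symmetry

variable [NormedSpace ℝ E] {p : Fin n → Fin n → ℝ} {σ : Equiv.Perm (Fin n)}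

lemma pairZ_map_comp_perm (A : E →ₗᵢ[ℝ] E) (σ : Equiv.Perm (Fin n)) (Y : Fin n → E) :
    pairZ β (fun i => A (Y (σ i))) = pairZ β Y := by
  simp only [pairZ, ← map_sub, A.norm_map]
  refine Fintype.sum_equiv σ _ _ fun k => Fintype.sum_equiv σ _ _ fun l => ?_
  simp only [ne_eq, EmbeddingLike.apply_eq_iff_eq]

lemma gradField_map_comp_perm (hσ : ∀ i j, i ≠ j → p (σ i) (σ j) = p i j) (A : E →ₗᵢ[ℝ] E)
    (Y : Fin n → E) (i : Fin n) :
    gradField β p (fun i => A (Y (σ i))) i = A (gradField β p Y (σ i)) := by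
  simp only [gradField, Finset.sum_filter, map_sum, apply_ite A, map_zero]
  refine Fintype.sum_equiv σ _ _ fun j => ?_
  rcases eq_or_ne j i with rfl | hji
  · rw [if_neg (not_not.2 rfl), if_neg (not_not.2 rfl)]
  · rw [if_pos hji, if_pos (σ.injective.ne hji)]
    simp only [qfun, pairZ_map_comp_perm, ← map_sub, A.norm_map, hσ i j hji.symm, map_smul]

lemma IsGradFlow.map_comp_perm {Y : ℝ → Fin n → E} (hY : IsGradFlow β p Y)
    (hσ : ∀ i j, i ≠ j → p (σ i) (σ j) = p i j) (A : E →ₗᵢ[ℝ] E) :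
    IsGradFlow β p fun t i => A (Y t (σ i)) := by
  intro i t ht
  have hA := A.toContinuousLinearMap.hasFDerivAt.comp_hasDerivWithinAt t (hY (σ i) t ht)
  exact hA.congr_deriv (gradField_map_comp_perm hσ A (Y t) i).symm

end Symmetry

lemma IsGradFlow.map_apply_perm_eq [InnerProductSpace ℝ E]
    (hβ : ContDiffOn ℝ 2 β (Set.Ici 0))
    (hpos : ∀ x ∈ Set.Ici (0 : ℝ), 0 < β x) {p : Fin n → Fin n → ℝ}
    {σ : Equiv.Perm (Fin n)} {Y : ℝ → Fin n → E} (hY : IsGradFlow β p Y)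
    (hσ : ∀ i j, i ≠ j → p (σ i) (σ j) = p i j) {A : E →ₗᵢ[ℝ] E}
    (h0 : ∀ i, A (Y 0 (σ i)) = Y 0 i) {t : ℝ} (ht : 0 ≤ t) (i : Fin n) :
    A (Y t (σ i)) = Y t i :=
  congrFun ((hY.map_comp_perm hσ A).eqOn_Ici hβ hpos hY (funext h0) ht) i

end GradientField

section Squares

variable {E : Type*} [NormedAddCommGroup E] [InnerProductSpace ℝ E]

/-- Symmetric weights on the vertices `0, 1, 2, 3` of a square, listed cyclically, with weight `a`
on the sides and `b` on the diagonals. The entries `p i i` are unconstrained, as they do not enter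
the flow. -/
structure IsSquareWeights (a b : ℝ) (p : Fin 4 → Fin 4 → ℝ) : Prop where
  symm : ∀ i j, p i j = p j i
  side : ∀ i, p i (i + 1) = a
  diagonal : ∀ i, p i (i + 2) = b

/-- The points `Y 0, Y 1, Y 2, Y 3` are, in cyclic order, the vertices of a (possibly degenerate)
square centred at the origin. -/
structure IsCenteredSquare (Y : Fin 4 → E) : Prop where
  two_eq_neg_zero : Y 2 = -Y 0
  three_eq_neg_one : Y 3 = -Y 1
  norm_zero_eq_norm_one : ‖Y 0‖ = ‖Y 1‖
  inner_zero_one : inner ℝ (Y 0) (Y 1) = 0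

lemma isSquareWeights_of_entries {a b : ℝ} {p : Fin 4 → Fin 4 → ℝ} (hsymm : ∀ i j, p i j = p j i)
    (h01 : p 0 1 = a) (h12 : p 1 2 = a) (h23 : p 2 3 = a) (h03 : p 0 3 = a)
    (h02 : p 0 2 = b) (h13 : p 1 3 = b) : IsSquareWeights a b p where
  symm := hsymm
  side i := by
    fin_cases i
    exacts [h01, h12, h23, (hsymm 3 0).trans h03]
  diagonal i := by
    fin_cases i
    exacts [h02, h13, (hsymm 2 0).trans h02, (hsymm 3 1).trans h13]

lemma IsSquareWeights.apply_add_one {a b : ℝ} {p : Fin 4 → Fin 4 → ℝ} (hp : IsSquareWeights a b p)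
    (i j : Fin 4) (hij : i ≠ j) : p (i + 1) (j + 1) = p i j := by
  have hcases : j = i + 1 ∨ i = j + 1 ∨ j = i + 2 := by
    revert i j
    decide
  rcases hcases with rfl | rfl | rfl
  · rw [hp.side, hp.side]
  · rw [hp.symm, hp.side, hp.symm, hp.side]
  · rw [add_right_comm, hp.diagonal, hp.diagonal]

lemma IsSquareWeights.apply_add_two {a b : ℝ} {p : Fin 4 → Fin 4 → ℝ} (hp : IsSquareWeights a b p)
    (i j : Fin 4) (hij : i ≠ j) : p (i + 2) (j + 2) = p i j := by
  rw [show (2 : Fin 4) = 1 + 1 from rfl, ← add_assoc, ← add_assoc,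
    hp.apply_add_one _ _ ((add_left_injective 1).ne hij), hp.apply_add_one _ _ hij]

lemma exists_linearIsometry_quarterTurn {v w : E} (hnorm : ‖v‖ = ‖w‖) (hinner : inner ℝ v w = 0) :
    ∃ J : E →ₗᵢ[ℝ] E, J v = w ∧ J w = -v := by
  let swap := (ℝ ∙ (v - w))ᗮ.reflection
  let flip := (ℝ ∙ v)ᗮ.reflection
  have hvw : swap v = w := Submodule.reflection_sub hnorm
  have hwv : swap w = v := by rw [← hvw, Submodule.reflection_reflection]
  have hv : flip v = -v := Submodule.reflection_orthogonalComplement_singleton_eq_neg v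
  have hw : flip w = w := Submodule.reflection_mem_subspace_eq_self
    (Submodule.mem_orthogonal_singleton_iff_inner_right.2 hinner)
  exact ⟨(swap.trans flip).toLinearIsometry, (congrArg flip hvw).trans hw,
    (congrArg flip hwv).trans hv⟩

namespace IsCenteredSquare

variable {Y : Fin 4 → E}

lemma neg_apply_add_two (hY : IsCenteredSquare Y) (i : Fin 4) : -Y (i + 2) = Y i := by
  fin_cases i
  · exact neg_eq_iff_eq_neg.2 hY.two_eq_neg_zero
  · exact neg_eq_iff_eq_neg.2 hY.three_eq_neg_one
  · exact hY.two_eq_neg_zero.symm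
  · exact hY.three_eq_neg_one.symm

lemma exists_map_apply_add_one_eq (hY : IsCenteredSquare Y) :
    ∃ J : E →ₗᵢ[ℝ] E, ∀ i, J (Y (i + 1)) = Y i := by
  obtain ⟨J, h1, h0⟩ := exists_linearIsometry_quarterTurn hY.norm_zero_eq_norm_one.symm
    (inner_eq_zero_symm.1 hY.inner_zero_one)
  refine ⟨J, fun i => ?_⟩
  fin_cases i
  · exact h1
  · exact (congrArg J hY.two_eq_neg_zero).trans (by simp [h0])
  · exact (congrArg J hY.three_eq_neg_one).trans (by simp [h1, hY.two_eq_neg_zero])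
  · exact h0.trans hY.three_eq_neg_one.symm

lemma of_symmetries {J : E →ₗᵢ[ℝ] E} (hJ : ∀ i, J (Y (i + 1)) = Y i)
    (hneg : ∀ i, -Y (i + 2) = Y i) : IsCenteredSquare Y where
  two_eq_neg_zero := (hneg 2).symm
  three_eq_neg_one := (hneg 3).symm
  norm_zero_eq_norm_one := by rw [← hJ 0, J.norm_map, zero_add]
  inner_zero_one := by
    have h : inner ℝ (Y 0) (Y 1) = -inner ℝ (Y 0) (Y 1) := calc
      inner ℝ (Y 0) (Y 1) = inner ℝ (J (Y 1)) (J (Y 2)) :=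
        congrArg₂ (inner ℝ) (hJ 0).symm (hJ 1).symm
      _ = inner ℝ (Y 1) (-Y 0) :=
        (J.inner_map_map _ _).trans (congrArg (inner ℝ (Y 1)) (hneg 2).symm)
      _ = -inner ℝ (Y 0) (Y 1) := by rw [inner_neg_right, real_inner_comm]
    linarith

lemma norm_apply (hY : IsCenteredSquare Y) (i : Fin 4) : ‖Y i‖ = ‖Y 0‖ := by
  fin_cases i
  · rfl
  · exact hY.norm_zero_eq_norm_one.symm
  · exact (congrArg norm hY.two_eq_neg_zero).trans (norm_neg _)
  · exact (congrArg norm hY.three_eq_neg_one).trans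
      ((norm_neg _).trans hY.norm_zero_eq_norm_one.symm)

lemma inner_apply_add_one (hY : IsCenteredSquare Y) (i : Fin 4) :
    inner ℝ (Y i) (Y (i + 1)) = 0 := by
  obtain ⟨J, hJ⟩ := hY.exists_map_apply_add_one_eq
  have hstep : ∀ i, inner ℝ (Y (i + 1)) (Y (i + 1 + 1)) = inner ℝ (Y i) (Y (i + 1)) := fun i => by
    rw [← J.inner_map_map, hJ, hJ]
  fin_cases i
  · exact hY.inner_zero_one
  · exact (hstep 0).trans hY.inner_zero_one
  · exact (hstep 1).trans ((hstep 0).trans hY.inner_zero_one)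
  · exact (hstep 2).trans ((hstep 1).trans ((hstep 0).trans hY.inner_zero_one))

lemma norm_sub_apply_add_one_sq (hY : IsCenteredSquare Y) (i : Fin 4) :
    ‖Y i - Y (i + 1)‖ ^ 2 = 2 * ‖Y 0‖ ^ 2 := by
  rw [norm_sub_sq_real, hY.inner_apply_add_one, hY.norm_apply, hY.norm_apply (i + 1)]
  ring

lemma norm_sub_apply_add_two (hY : IsCenteredSquare Y) (i : Fin 4) :
    ‖Y i - Y (i + 2)‖ = 2 * ‖Y 0‖ := by
  rw [sub_eq_add_neg, hY.neg_apply_add_two, ← two_smul ℝ, norm_smul, hY.norm_apply,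
    Real.norm_two]

lemma two_mul_norm_le_diamY (hY : IsCenteredSquare Y) : 2 * ‖Y 0‖ ≤ diamY Y := by
  rw [← hY.norm_sub_apply_add_two 0, ← dist_eq_norm]
  exact dist_le_diamY Y 0 (0 + 2)

lemma norm_sub_apply_add_two_sq (hY : IsCenteredSquare Y) (i : Fin 4) :
    ‖Y i - Y (i + 2)‖ ^ 2 = 4 * ‖Y 0‖ ^ 2 := by
  rw [hY.norm_sub_apply_add_two]
  ring

lemma norm_sub_apply_add_three_sq (hY : IsCenteredSquare Y) (i : Fin 4) :
    ‖Y i - Y (i + 3)‖ ^ 2 = 2 * ‖Y 0‖ ^ 2 := by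
  rw [norm_sub_rev, ← hY.norm_sub_apply_add_one_sq (i + 3), add_assoc]
  simp

lemma pairZ_eq (hY : IsCenteredSquare Y) (β : ℝ → ℝ) :
    pairZ β Y = 8 * β (2 * ‖Y 0‖ ^ 2) + 4 * β (4 * ‖Y 0‖ ^ 2) := by
  have hrow : ∀ k, (∑ l, if k ≠ l then β (‖Y k - Y l‖ ^ 2) else 0) =
      2 * β (2 * ‖Y 0‖ ^ 2) + β (4 * ‖Y 0‖ ^ 2) := fun k => by
    rw [← Equiv.sum_comp (Equiv.addLeft k)]
    simp only [Equiv.coe_addLeft, ne_eq, left_eq_add, ite_not, Fin.sum_univ_four, ↓reduceIte,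
      one_ne_zero, Fin.reduceEq, zero_add, hY.norm_sub_apply_add_one_sq,
      hY.norm_sub_apply_add_two_sq, hY.norm_sub_apply_add_three_sq]
    ring
  rw [pairZ, Fintype.sum_congr _ _ hrow, Fin.sum_const, nsmul_eq_mul]
  push_cast
  ring

lemma gradField_apply_zero (hY : IsCenteredSquare Y) {a b : ℝ} {p : Fin 4 → Fin 4 → ℝ}
    (hp : IsSquareWeights a b p) (β : ℝ → ℝ) :
    gradField β p Y 0 =
      (8 * ((a - β (2 * ‖Y 0‖ ^ 2) / pairZ β Y) * lbd β (2 * ‖Y 0‖ ^ 2) +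
        (b - β (4 * ‖Y 0‖ ^ 2) / pairZ β Y) * lbd β (4 * ‖Y 0‖ ^ 2))) • Y 0 := by
  have hd1 : ‖Y 0 - Y 1‖ ^ 2 = 2 * ‖Y 0‖ ^ 2 := hY.norm_sub_apply_add_one_sq 0
  have hd2 : ‖Y 0 - Y 2‖ ^ 2 = 4 * ‖Y 0‖ ^ 2 := hY.norm_sub_apply_add_two_sq 0
  have hd3 : ‖Y 0 - Y 3‖ ^ 2 = 2 * ‖Y 0‖ ^ 2 := hY.norm_sub_apply_add_three_sq 0
  have hp1 : p 0 1 = a := hp.side 0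
  have hp2 : p 0 2 = b := hp.diagonal 0
  have hp3 : p 0 3 = a := (hp.symm 0 3).trans (hp.side 3)
  have hne : Finset.univ.filter (· ≠ (0 : Fin 4)) = {1, 2, 3} := by decide
  rw [gradField, hne, Finset.sum_insert (by decide), Finset.sum_pair (by decide)]
  simp only [qfun, hd1, hd2, hd3, hp1, hp2, hp3]
  rw [hY.two_eq_neg_zero, hY.three_eq_neg_one]
  module

end IsCenteredSquare

lemma IsGradFlow.isCenteredSquare {β : ℝ → ℝ} (hβ : ContDiffOn ℝ 2 β (Set.Ici 0))
    (hpos : ∀ x ∈ Set.Ici (0 : ℝ), 0 < β x) {a b : ℝ} {p : Fin 4 → Fin 4 → ℝ}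
    (hp : IsSquareWeights a b p) {Y : ℝ → Fin 4 → E} (hY : IsGradFlow β p Y)
    (h0 : IsCenteredSquare (Y 0)) {t : ℝ} (ht : 0 ≤ t) : IsCenteredSquare (Y t) := by
  obtain ⟨J, hJ⟩ := h0.exists_map_apply_add_one_eq
  exact .of_symmetries
    (hY.map_apply_perm_eq hβ hpos (σ := Equiv.addRight 1) hp.apply_add_one hJ ht)
    (hY.map_apply_perm_eq hβ hpos (σ := Equiv.addRight 2) hp.apply_add_two
      (A := (LinearIsometryEquiv.neg ℝ).toLinearIsometry) h0.neg_apply_add_two ht)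

lemma isCenteredSquare_of_coords {x : ℝ} {Y : Fin 4 → EuclideanSpace ℝ (Fin 2)}
    (h0 : Y 0 = ![x, 0]) (h1 : Y 1 = ![0, x]) (h2 : Y 2 = ![-x, 0]) (h3 : Y 3 = ![0, -x]) :
    IsCenteredSquare Y where
  two_eq_neg_zero := by ext i; fin_cases i <;> simp [h0, h2]
  three_eq_neg_one := by ext i; fin_cases i <;> simp [h1, h3]
  norm_zero_eq_norm_one := by simp [EuclideanSpace.norm_eq, h0, h1]
  inner_zero_one := by simp [PiLp.inner_apply, h0, h1]

end Squares

section CauchyKernel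

/-- The kernel `β(x) = (1 + x)⁻¹`, used by t-SNE. -/
noncomputable def cauchyKernel : ℝ → ℝ := fun x => (1 + x)⁻¹

lemma cauchyKernel_pos : ∀ x ∈ Set.Ici (0 : ℝ), 0 < cauchyKernel x := fun _ hx =>
  inv_pos.2 (add_pos_of_pos_of_nonneg one_pos hx)

lemma contDiffOn_cauchyKernel {m : WithTop ℕ∞} : ContDiffOn ℝ m cauchyKernel (Set.Ici 0) :=
  (contDiff_const.add contDiff_id).contDiffOn.inv fun _ hx =>
    (add_pos_of_pos_of_nonneg one_pos hx).ne'

lemma lbd_cauchyKernel {x : ℝ} (hx : 0 ≤ x) : lbd cauchyKernel x = -(1 + x)⁻¹ := by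
  have hlog : HasDerivAt (fun y => Real.log (cauchyKernel y)) (-(1 + x)⁻¹) x := by
    simpa [cauchyKernel, Real.log_inv] using
      (((hasDerivAt_id x).const_add 1).log (by positivity : 1 + x ≠ 0)).fun_neg
  exact hlog.hasDerivWithinAt.derivWithin (uniqueDiffOn_Ici 0 x hx)

/-- The rate `r(u)` at which the flow with kernel `cauchyKernel`, side weight `a` and diagonal
weight `(1 - 8 * a) / 4` expands a centred square whose squared circumradius is `u`: each vertex
`y` moves by `y' = r(u) y`. The quotient `(1 + 4 * u) / (12 + 40 * u)` is the similarity `q` of two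
adjacent vertices. -/
noncomputable def squareRate (a u : ℝ) : ℝ :=
  8 * (a - (1 + 4 * u) / (12 + 40 * u)) / ((1 + 2 * u) * (1 + 4 * u))

lemma IsCenteredSquare.gradField_cauchyKernel_apply_zero {E : Type*} [NormedAddCommGroup E]
    [InnerProductSpace ℝ E] {Y : Fin 4 → E} (hY : IsCenteredSquare Y) {a : ℝ}
    {p : Fin 4 → Fin 4 → ℝ} (hp : IsSquareWeights a ((1 - 8 * a) / 4) p) :
    gradField cauchyKernel p Y 0 = squareRate a (‖Y 0‖ ^ 2) • Y 0 := by
  rw [hY.gradField_apply_zero hp, hY.pairZ_eq, lbd_cauchyKernel (by positivity),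
    lbd_cauchyKernel (by positivity)]
  have hu : 0 ≤ ‖Y 0‖ ^ 2 := by positivity
  generalize ‖Y 0‖ ^ 2 = u at hu ⊢
  have hZ : 8 * cauchyKernel (2 * u) + 4 * cauchyKernel (4 * u) =
      (12 + 40 * u) / ((1 + 2 * u) * (1 + 4 * u)) := by
    simp only [cauchyKernel]
    field_simp
    ring
  have hside : cauchyKernel (2 * u) / (8 * cauchyKernel (2 * u) + 4 * cauchyKernel (4 * u)) =
      (1 + 4 * u) / (12 + 40 * u) := by
    rw [hZ, cauchyKernel]
    field_simp
  have hdiagonal : cauchyKernel (4 * u) / (8 * cauchyKernel (2 * u) + 4 * cauchyKernel (4 * u)) =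
      (1 + 2 * u) / (12 + 40 * u) := by
    rw [hZ, cauchyKernel]
    field_simp
  rw [hside, hdiagonal, squareRate]
  congr 1
  field_simp
  ring

lemma IsGradFlow.hasDerivWithinAt_norm_sq {E : Type*} [NormedAddCommGroup E]
    [InnerProductSpace ℝ E] {a : ℝ} {p : Fin 4 → Fin 4 → ℝ}
    (hp : IsSquareWeights a ((1 - 8 * a) / 4) p) {Y : ℝ → Fin 4 → E}
    (hflow : IsGradFlow cauchyKernel p Y) {t : ℝ} (ht : t ∈ Set.Ici (0 : ℝ))
    (hY : IsCenteredSquare (Y t)) :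
    HasDerivWithinAt (fun s => ‖Y s 0‖ ^ 2)
      (2 * (squareRate a (‖Y t 0‖ ^ 2) * ‖Y t 0‖ ^ 2)) (Set.Ici 0) t := by
  have hzero := hasDerivWithinAt_pi.1 (isGradFlow_iff_hasDerivWithinAt.1 hflow t ht) 0
  rw [hY.gradField_cauchyKernel_apply_zero hp] at hzero
  simpa only [real_inner_smul_right, real_inner_self_eq_norm_sq] using hzero.norm_sq

lemma le_squareRate (a : ℝ) {u : ℝ} (hu : 0 ≤ u) :
    8 * (a - 1 / 10) / ((1 + 2 * u) * (1 + 4 * u)) ≤ squareRate a u := by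
  have hside : (1 + 4 * u) / (12 + 40 * u) ≤ 1 / 10 := by
    rw [div_le_div_iff₀ (by positivity) (by positivity)]
    linarith
  unfold squareRate
  gcongr

lemma squareRate_nonneg {a u : ℝ} (ha : 1 / 10 ≤ a) (hu : 0 ≤ u) : 0 ≤ squareRate a u := by
  have hlower : 0 ≤ 8 * (a - 1 / 10) / ((1 + 2 * u) * (1 + 4 * u)) :=
    div_nonneg (mul_nonneg (by norm_num) (sub_nonneg.2 ha)) (by positivity)
  exact hlower.trans (le_squareRate a hu)

lemma exists_pos_forall_le_sq_mul_squareRate {a u₀ : ℝ} (ha : 1 / 10 < a) (hu₀ : 0 < u₀) :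
    ∃ κ > 0, ∀ u, u₀ ≤ u → κ ≤ u ^ 2 * squareRate a u := by
  have hcoeff : 0 < 8 * (a - 1 / 10) := mul_pos (by norm_num) (sub_pos.2 ha)
  refine ⟨8 * (a - 1 / 10) * ((u₀ / (1 + 2 * u₀)) * (u₀ / (1 + 4 * u₀))),
    mul_pos hcoeff (by positivity), fun u hu => ?_⟩
  have hu_pos : 0 < u := hu₀.trans_le hu
  have hmono : ∀ c : ℝ, 0 ≤ c → u₀ / (1 + c * u₀) ≤ u / (1 + c * u) := fun c hc => by
    rw [div_le_div_iff₀ (by positivity) (by positivity)]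
    linarith
  calc 8 * (a - 1 / 10) * ((u₀ / (1 + 2 * u₀)) * (u₀ / (1 + 4 * u₀)))
      ≤ 8 * (a - 1 / 10) * ((u / (1 + 2 * u)) * (u / (1 + 4 * u))) := by
        gcongr 8 * (a - 1 / 10) * (?_ * ?_)
        exacts [hmono 2 (by norm_num), hmono 4 (by norm_num)]
    _ = u ^ 2 * (8 * (a - 1 / 10) / ((1 + 2 * u) * (1 + 4 * u))) := by field_simp
    _ ≤ u ^ 2 * squareRate a u := by
        gcongr
        exact le_squareRate a hu_pos.le

lemma exists_pos_forall_mul_le_sq_of_hasDerivWithinAt {a : ℝ} (ha : 1 / 10 < a) {u : ℝ → ℝ}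
    (hu_nonneg : ∀ t ∈ Set.Ici (0 : ℝ), 0 ≤ u t) (hu₀ : 0 < u 0)
    (hu : ∀ t ∈ Set.Ici (0 : ℝ),
      HasDerivWithinAt u (2 * (squareRate a (u t) * u t)) (Set.Ici 0) t) :
    ∃ κ > 0, ∀ t ∈ Set.Ici (0 : ℝ), κ * t ≤ u t ^ 2 := by
  obtain ⟨κ, hκ, hrate⟩ := exists_pos_forall_le_sq_mul_squareRate ha hu₀
  refine ⟨4 * κ, by positivity, fun t ht => ?_⟩
  have hincr : ∀ s ∈ Set.Ici (0 : ℝ), u 0 ≤ u s := fun s hs => by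
    have h := add_mul_le_of_le_hasDerivWithinAt (κ := 0) hu (fun r hr =>
      mul_nonneg zero_le_two (mul_nonneg (squareRate_nonneg ha.le (hu_nonneg r hr))
        (hu_nonneg r hr))) hs
    linarith
  have hderiv_sq : ∀ s ∈ Set.Ici (0 : ℝ), HasDerivWithinAt (fun r => u r ^ 2)
      (4 * (u s ^ 2 * squareRate a (u s))) (Set.Ici 0) s := fun s hs =>
    ((hu s hs).fun_pow 2).congr_deriv (by push_cast; ring)
  have hsq := add_mul_le_of_le_hasDerivWithinAt hderiv_sq (κ := 4 * κ)
    (fun s hs => mul_le_mul_of_nonneg_left (hrate (u s) (hincr s hs)) zero_le_four) ht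
  linarith [sq_nonneg (u 0)]

end CauchyKernel

theorem four_points_divergence_example_general {E : Type*} [NormedAddCommGroup E]
    [InnerProductSpace ℝ E] {a : ℝ} (ha : 1 / 10 < a) {p : Fin 4 → Fin 4 → ℝ}
    (hp : IsSquareWeights a ((1 - 8 * a) / 4) p) {Y : ℝ → Fin 4 → E}
    (hflow : IsGradFlow cauchyKernel p Y) (hY0 : IsCenteredSquare (Y 0)) (hne : Y 0 0 ≠ 0) :
    ∃ c : ℝ, 0 < c ∧ ∀ t : ℝ, 0 ≤ t → c * t ^ ((1 : ℝ) / 4) ≤ diamY (Y t) := by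
  have hsquare : ∀ t, 0 ≤ t → IsCenteredSquare (Y t) := fun t ht =>
    hflow.isCenteredSquare contDiffOn_cauchyKernel cauchyKernel_pos hp hY0 ht
  obtain ⟨κ, hκ, hgrowth⟩ := exists_pos_forall_mul_le_sq_of_hasDerivWithinAt ha
    (u := fun t => ‖Y t 0‖ ^ 2) (fun _ _ => sq_nonneg _) (pow_pos (norm_pos_iff.2 hne) 2)
    fun t ht => hflow.hasDerivWithinAt_norm_sq hp ht (hsquare t ht)
  refine ⟨2 * κ ^ ((1 : ℝ) / 4), by positivity, fun t ht => ?_⟩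
  calc 2 * κ ^ ((1 : ℝ) / 4) * t ^ ((1 : ℝ) / 4)
      = 2 * (κ * t) ^ ((1 : ℝ) / 4) := by rw [Real.mul_rpow hκ.le ht, mul_assoc]
    _ ≤ 2 * ((‖Y t 0‖ ^ 2) ^ 2) ^ ((1 : ℝ) / 4) := by
        gcongr
        exact hgrowth t ht
    _ = 2 * ‖Y t 0‖ := by
        rw [← pow_mul, one_div]
        exact congrArg (2 * ·) (Real.pow_rpow_inv_natCast (norm_nonneg _) four_ne_zero)
    _ ≤ diamY (Y t) := (hsquare t ht).two_mul_norm_le_diamY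

/-- **Example 4.2.** For `n = 4` points in `ℝ²` with `β(x) = (1+x)⁻¹`, weights
`p_{12} = p_{23} = p_{34} = p_{14} = a` and `p_{13} = p_{24} = (1-8a)/4` with
`a ∈ (1/10, 1/8)`, and initial data on the coordinate axes at distance `X₀ > 0` from the
origin, the gradient flow satisfies `diam Y(t) ≥ c t^{1/4}` for all `t ≥ 0`. -/
theorem four_points_divergence_example
    (β : ℝ → ℝ) (hβ : β = fun x => (1 + x)⁻¹)
    (a : ℝ) (ha₁ : 1 / 10 < a) (ha₂ : a < 1 / 8)
    (p : Fin 4 → Fin 4 → ℝ)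
    (hsymm : ∀ i j, p i j = p j i)
    (hp12 : p 0 1 = a) (hp23 : p 1 2 = a) (hp34 : p 2 3 = a) (hp14 : p 0 3 = a)
    (hp13 : p 0 2 = (1 - 8 * a) / 4) (hp24 : p 1 3 = (1 - 8 * a) / 4)
    (X₀ : ℝ) (hX₀ : 0 < X₀)
    (Y : ℝ → Fin 4 → EuclideanSpace ℝ (Fin 2))
    (hflow : IsGradFlow β p Y)
    (hY0 : Y 0 0 = ![X₀, 0] ∧ Y 0 1 = ![0, X₀] ∧
           Y 0 2 = ![-X₀, 0] ∧ Y 0 3 = ![0, -X₀]) :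
    ∃ c : ℝ, 0 < c ∧ ∀ t : ℝ, 0 ≤ t → c * t ^ ((1 : ℝ) / 4) ≤ diamY (Y t) := by
  subst hβ
  have hp : IsSquareWeights a ((1 - 8 * a) / 4) p :=
    isSquareWeights_of_entries hsymm hp12 hp23 hp34 hp14 hp13 hp24
  obtain ⟨h0, h1, h2, h3⟩ := hY0
  have hne : Y 0 0 ≠ 0 := fun h => hX₀.ne' (by simpa [h] using (congrFun h0 0).symm)
  exact four_points_divergence_example_general ha₁ hp hflow
    (isCenteredSquare_of_coords h0 h1 h2 h3) hne
end
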